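/- Let 𝕏 ⊆ ℙ^n_K be a 0-dimensional locally Gorenstein scheme and σ a homogeneous trace map of degree zero of Q^h(R)/L_0. Then 𝔉_{R̃/R}^2 ⊆ δ^σ_𝕏 ⊆ 𝔉_{R̃/R}. -/

import Mathlib

noncomputable section

/-! An algebraic model for a 0-dimensional subscheme `𝕏 ⊆ ℙⁿ_K` whose support avoids
the hyperplane `Z(X₀)`.  The scheme is recorded through the local rings
`𝒪_{𝕏,p_j}` at the points `p_1, …, p_s` of its support, together with the germ map
sending a homogeneous polynomial `F` of degree `i` to the tuple of germs
`(F_{p_1}, …, F_{p_s})`; this is the degree-`i` component of the injection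
`ĩ : R → Q^h(R) ≅ ∏_j 𝒪_{𝕏,p_j}[T_j, T_j⁻¹]`, where every graded component of
`Q^h(R)` is identified with `Γ = ∏_j 𝒪_{𝕏,p_j}` by dropping the powers of the `T_j`.
Since `x₀` has germ `1` at every point, the homogeneous coordinate ring
`R = P/I_𝕏` is faithfully encoded by the chain of subspaces
`R_i ≅ V_i = germ(P_i) ⊆ Γ` (with `V_i ⊆ V_{i+1}`, and `V_i = Γ` for `i ≫ 0`). -/

/-- The data of one (fat) point of a 0-dimensional scheme: a finite local `K`-algebra. -/
structure PointData (K : Type) [Field K] : Type 1 where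
  carrier : Type
  [ring : CommRing carrier]
  [alg : Algebra K carrier]
  [loc : IsLocalRing carrier]
  [findim : FiniteDimensional K carrier]

attribute [instance] PointData.ring PointData.alg PointData.loc PointData.findim

/-- A model of a 0-dimensional subscheme of `ℙⁿ_K`, no point of whose support lies
on `Z(X₀)` (coordinates being chosen so that each point has `X₀`-coordinate 1, the
germ of `x₀` at every point is `1`). -/
structure ZeroDimScheme (K : Type) [Field K] (n : ℕ) : Type 1 where
  /-- the number of points in the support -/
  s : ℕ
  spos : 0 < s
  /-- the local rings `𝒪_{𝕏,p_j}` -/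
  pt : Fin s → PointData K
  /-- the germ map: for `F` homogeneous of degree `i` this is the degree-`i`
  component of `ĩ : R → Q^h(R)`, i.e. `F ↦ (F_{p_1}, …, F_{p_s})` -/
  germ : MvPolynomial (Fin (n + 1)) K →ₐ[K] ∀ j, (pt j).carrier
  /-- the germ of `X₀` at each point is `1` -/
  germ_X0 : germ (MvPolynomial.X 0) = 1
  /-- in all large degrees, the germ map is surjective onto `∏_j 𝒪_{𝕏,p_j}`
  (this characterizes `I_𝕏` as the full homogeneous vanishing ideal of the scheme) -/
  eventually_surj : ∃ N : ℕ, ∀ i, N ≤ i →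
    Submodule.map germ.toLinearMap
      (MvPolynomial.homogeneousSubmodule (Fin (n + 1)) K i) = ⊤

namespace ZeroDimScheme

variable {K : Type} [Field K] {n : ℕ}

/-- `Γ = ∏_j 𝒪_{𝕏,p_j}`, the common model for every graded component of `Q^h(R)`. -/
abbrev Gamma (S : ZeroDimScheme K n) : Type := ∀ j, (S.pt j).carrier

variable (S : ZeroDimScheme K n)

/-- `V i ⊆ Γ` is the image of the degree-`i` component `R_i` of the homogeneous
coordinate ring `R` under (the degree-`i` component of) `ĩ`; we identify `R_i ≅ V i`. -/
def V (i : ℕ) : Submodule K S.Gamma :=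
  Submodule.map S.germ.toLinearMap
    (MvPolynomial.homogeneousSubmodule (Fin (n + 1)) K i)

/-- `R_i` for `i : ℤ` (zero in negative degrees). -/
def Vz (i : ℤ) : Submodule K S.Gamma := if 0 ≤ i then S.V i.toNat else ⊥

/-- `deg 𝕏 = Σ_j dim_K 𝒪_{𝕏,p_j}`. -/
def degX : ℕ := Module.finrank K S.Gamma

/-- The Hilbert function `HF_𝕏(i) = dim_K R_i`. -/
def HF (i : ℕ) : ℕ := Module.finrank K (S.V i)

/-- The Hilbert function on `ℤ`. -/
def HFz (i : ℤ) : ℕ := Module.finrank K (S.Vz i)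

/-- The regularity index `r_𝕏`: the least `r` with `HF_𝕏(i) = deg 𝕏` for all `i ≥ r`. -/
def rX : ℕ := sInf {r : ℕ | ∀ i, r ≤ i → S.HF i = S.degX}

/-- `κ_j = dim_K κ(p_j)`, the residue field of `𝕏` at `p_j`. -/
def kappa (j : Fin S.s) : ℕ :=
  Module.finrank K
    ((S.pt j).carrier ⧸
      Submodule.restrictScalars K (IsLocalRing.maximalIdeal (S.pt j).carrier))

/-- `sj` is a socle element of `𝒪_{𝕏,p_j}`, i.e. `sj ∈ Ann(𝔪_{𝕏,p_j})`.  By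
Proposition 1.2, the maximal `p_j`-subschemes `𝕐 ⊆ 𝕏` correspond 1-1 to the ideals
of `Γ` generated by `(0,…,0,sj,0,…,0)` with `sj` a *nonzero* socle element. -/
def IsSocle (j : Fin S.s) (sj : (S.pt j).carrier) : Prop :=
  ∀ b ∈ IsLocalRing.maximalIdeal (S.pt j).carrier, sj * b = 0

/-- The ideal `U = ⟨(0,…,0,sj,0,…,0)⟩` of `Γ` corresponding to the maximal
`p_j`-subscheme `𝕐` determined by the socle element `sj`; one has `I_{𝕐/𝕏} = ĩ⁻¹(U)`. -/
def sepIdeal (j : Fin S.s) (sj : (S.pt j).carrier) : Submodule K S.Gamma :=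
  Submodule.restrictScalars K (Ideal.span {(Pi.single j sj : S.Gamma)})

/-- The degree-`i` component `(I_{𝕐/𝕏})_i = R_i ∩ ĩ⁻¹(U)` of the ideal of the maximal
`p_j`-subscheme `𝕐` (given by the socle element `sj`) in `R`. -/
def IY (j : Fin S.s) (sj : (S.pt j).carrier) (i : ℕ) : Submodule K S.Gamma :=
  S.V i ⊓ S.sepIdeal j sj

/-- `(I_{𝕐/𝕏})_i` for `i : ℤ`. -/
def IYz (j : Fin S.s) (sj : (S.pt j).carrier) (i : ℤ) : Submodule K S.Gamma :=
  S.Vz i ⊓ S.sepIdeal j sj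

/-- The Hilbert function `HF_𝕐(i) = HF_𝕏(i) - dim_K (I_{𝕐/𝕏})_i` of the maximal
`p_j`-subscheme `𝕐` given by the socle element `sj`. -/
def HFY (j : Fin S.s) (sj : (S.pt j).carrier) (i : ℕ) : ℕ :=
  S.HF i - Module.finrank K (S.IY j sj i)

/-- `HF_𝕐` on `ℤ`. -/
def HFYz (j : Fin S.s) (sj : (S.pt j).carrier) (i : ℤ) : ℕ :=
  S.HFz i - Module.finrank K (S.IYz j sj i)

/-- `α_{𝕐/𝕏} = min {i | (I_{𝕐/𝕏})_i ≠ 0}`. -/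
def alphaY (j : Fin S.s) (sj : (S.pt j).carrier) : ℕ :=
  sInf {i : ℕ | S.IY j sj i ≠ ⊥}

/-- `μ(a) = min {i | (0,…,0,a T_j^i,0,…,0) ∈ ĩ(R)}` for `a ∈ 𝒪_{𝕏,p_j}`. -/
def mu (j : Fin S.s) (a : (S.pt j).carrier) : ℕ :=
  sInf {i : ℕ | (Pi.single j a : S.Gamma) ∈ S.V i}

/-- `μ_{𝕐/𝕏}`, the maximal degree of a minimal separator of the maximal
`p_j`-subscheme `𝕐` given by the socle element `sj`; independently of all choices it
equals `max {μ(a·sj) | a ∈ 𝒪_{𝕏,p_j}, a·sj ≠ 0}`. -/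
def muY (j : Fin S.s) (sj : (S.pt j).carrier) : ℕ :=
  sSup {m : ℕ | ∃ a : (S.pt j).carrier, a * sj ≠ 0 ∧ m = S.mu j (a * sj)}

/-- `deg_𝕏(p_j) = min {μ_{𝕐/𝕏} | 𝕐 a maximal p_j-subscheme of 𝕏}`. -/
def degP (j : Fin S.s) : ℕ :=
  sInf {m : ℕ | ∃ sj : (S.pt j).carrier, S.IsSocle j sj ∧ sj ≠ 0 ∧ m = S.muY j sj}

/-- `𝕏` has the Cayley–Bacharach property of degree `d`: `deg_𝕏(p_j) ≥ d + 1` for all `j`. -/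
def CBP (d : ℕ) : Prop := ∀ j : Fin S.s, d + 1 ≤ S.degP j

/-- `𝕏` is a Cayley–Bacharach scheme: it has `CBP(r_𝕏 - 1)`. -/
def CayleyBacharach : Prop := S.CBP (S.rX - 1)

/-- The residue class map `𝒪_{𝕏,p_j} → κ(p_j)` as a `K`-linear map. -/
def resQ (j : Fin S.s) :
    (S.pt j).carrier →ₗ[K]
      ((S.pt j).carrier ⧸
        Submodule.restrictScalars K (IsLocalRing.maximalIdeal (S.pt j).carrier)) :=
  (Submodule.restrictScalars K (IsLocalRing.maximalIdeal (S.pt j).carrier)).mkQ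

/-- The residue classes of `e 0, …, e (κ_j - 1)` form a `K`-basis of `κ(p_j)`. -/
def IsResidueBasis (j : Fin S.s) {m : ℕ} (e : Fin m → (S.pt j).carrier) : Prop :=
  LinearIndependent K (fun k => S.resQ j (e k)) ∧
    Submodule.span K (Set.range fun k => S.resQ j (e k)) = ⊤

/-- A family `τ_j : 𝒪_{𝕏,p_j} → K` of trace maps: each `τ_j` is a generator of
`Hom_K(𝒪_{𝕏,p_j}, K)` as an `𝒪_{𝕏,p_j}`-module.  Such a family exists iff `𝕏` is
locally Gorenstein, and it induces a homogeneous trace map `σ` of degree zero of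
`Q^h(R)/L₀` (componentwise). -/
def IsTraceFamily (τ : ∀ j, (S.pt j).carrier →ₗ[K] K) : Prop :=
  ∀ j, Function.Bijective
    (fun a : (S.pt j).carrier => (τ j).comp (LinearMap.mulRight K a))

/-- The total trace `Γ → K`, `y ↦ Σ_j τ_j (y_j)`; on the degree-`i` component of
`Q^h(R)` the trace map `σ` is `q ↦ (Ttot τ q)·x₀^i`. -/
def Ttot (τ : ∀ j, (S.pt j).carrier →ₗ[K] K) : S.Gamma →ₗ[K] K :=
  ∑ j : Fin S.s, (τ j).comp (LinearMap.proj j)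

/-- The degree-`k` component `(𝔠^σ_𝕏)_k ⊆ Q^h(R)_k ≅ Γ` of the Dedekind complementary
module: `g ∈ (𝔠^σ_𝕏)_k` iff `σ(g · R) ⊆ K[x₀]`, i.e. `Ttot τ (g·x) = 0` whenever
`x ∈ R_i` with `k + i < 0`. -/
def Cmod (τ : ∀ j, (S.pt j).carrier →ₗ[K] K) (k : ℤ) : Submodule K S.Gamma :=
  ⨅ (i : ℕ) (_ : k + (i : ℤ) < 0) (x : S.Gamma) (_ : x ∈ S.V i),
    LinearMap.ker ((S.Ttot τ).comp (LinearMap.mulRight K x))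

/-- The degree-`i` component `(δ^σ_𝕏)_i ⊆ Q^h(R)_i ≅ Γ` of the Dedekind different
`δ^σ_𝕏 = {f ∈ Q^h(R) | f · 𝔠^σ_𝕏 ⊆ R}`. -/
def delta (τ : ∀ j, (S.pt j).carrier →ₗ[K] K) (i : ℤ) : Submodule K S.Gamma :=
  ⨅ (k : ℤ) (g : S.Gamma) (_ : g ∈ S.Cmod τ k),
    Submodule.comap (LinearMap.mulRight K g) (S.Vz (i + k))

/-- The Hilbert function of the Dedekind different. -/
def HFdelta (τ : ∀ j, (S.pt j).carrier →ₗ[K] K) (i : ℤ) : ℕ :=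
  Module.finrank K (S.delta τ i)

/-- `𝕏` has minimal Dedekind different: `δ^σ_𝕏 = ⊕_{i ≥ 2 r_𝕏} R_i`
(recall `R_i ≅ Γ` for `i ≥ r_𝕏`). -/
def MinimalDedekind (τ : ∀ j, (S.pt j).carrier →ₗ[K] K) : Prop :=
  ∀ i : ℤ, S.delta τ i = if 2 * (S.rX : ℤ) ≤ i then ⊤ else ⊥

/-- The degree-`i` component (`i ≥ 0`) of the conductor
`𝔉_{R̃/R} = {f ∈ R̃ | f·R̃ ⊆ R}` of `R` in `R̃ = ∏_j 𝒪_{𝕏,p_j}[T_j]`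
(whose degree-`i` component is all of `Γ` for every `i ≥ 0`). -/
def cond (i : ℕ) : Submodule K S.Gamma :=
  ⨅ y : S.Gamma, Submodule.comap (LinearMap.mulRight K y) (S.V i)

/-- The conductor on `ℤ` (zero in negative degrees, where `R̃` vanishes). -/
def condZ (i : ℤ) : Submodule K S.Gamma := if 0 ≤ i then S.cond i.toNat else ⊥

/-- The degree-`i` component of the trace `tr(𝔠^σ_𝕏) = δ^σ_𝕏 · 𝔠^σ_𝕏` of the
Dedekind complementary module. -/
def trC (τ : ∀ j, (S.pt j).carrier →ₗ[K] K) (i : ℤ) : Submodule K S.Gamma :=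
  ⨆ (a : ℤ) (b : ℤ) (_ : a + b = i), S.delta τ a * S.Cmod τ b

/-- `𝕏` is nearly Gorenstein: `𝔪 ⊆ tr(𝔠^σ_𝕏)`. -/
def NearlyGorenstein (τ : ∀ j, (S.pt j).carrier →ₗ[K] K) : Prop :=
  ∀ i : ℤ, 1 ≤ i → S.Vz i ≤ S.trC τ i

/-- `𝕏` is almost Gorenstein: there is an exact sequence of graded `R`-modules
`0 → R → 𝔠^σ_𝕏(-r_𝕏) → C → 0` with `𝔪·C = 0`.  A degree-zero graded injection
`R → 𝔠^σ_𝕏(-r_𝕏)` is multiplication by an element `g ∈ (𝔠^σ_𝕏)_{-r_𝕏}` with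
`Ann_R(g) = 0`, and `𝔪·C = 0` means `𝔪 · 𝔠^σ_𝕏(-r_𝕏) ⊆ g·R`. -/
def AlmostGorenstein (τ : ∀ j, (S.pt j).carrier →ₗ[K] K) : Prop :=
  ∃ g ∈ S.Cmod τ (-(S.rX : ℤ)),
    (∀ i : ℕ, ∀ x ∈ S.V i, x * g = 0 → x = 0) ∧
    (∀ a : ℕ, 1 ≤ a → ∀ x ∈ S.V a, ∀ k : ℤ, ∀ h ∈ S.Cmod τ k,
      x * h ∈ Submodule.map (LinearMap.mulRight K g) (S.Vz ((a : ℤ) + k + (S.rX : ℤ))))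

/-- `𝕏` is arithmetically Gorenstein, i.e. `R` is a Gorenstein ring; equivalently the
canonical module is free of rank one: `𝔠^σ_𝕏 = g·R` for some `g ∈ (𝔠^σ_𝕏)_{-r_𝕏}`. -/
def ArithGorenstein (τ : ∀ j, (S.pt j).carrier →ₗ[K] K) : Prop :=
  ∃ g ∈ S.Cmod τ (-(S.rX : ℤ)),
    ∀ k : ℤ, S.Cmod τ k = Submodule.map (LinearMap.mulRight K g) (S.Vz (k + (S.rX : ℤ)))

/-- `𝕏` is level: the socle of `R̄ = R/⟨x₀⟩` equals `R̄_{r_𝕏}`, i.e. no nonzero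
homogeneous element of `R̄` of degree `< r_𝕏` is annihilated by `𝔪̄` (recall
`R̄_i ≅ V i / V (i-1)` and `x₀`-multiplication preserves germs). -/
def Level : Prop :=
  ∀ i : ℕ, i < S.rX → ∀ x ∈ S.V i,
    (∀ a : ℕ, 1 ≤ a → ∀ y ∈ S.V a, x * y ∈ S.Vz ((i : ℤ) + (a : ℤ) - 1)) →
      x ∈ S.Vz ((i : ℤ) - 1)

/-- The subspace `{x ∈ Γ | x_k = 0 for k ≠ j}` of `Γ`: the degreewise model for the
ideal of the subscheme `𝕐_j ⊆ 𝕏` with `I_{𝕐_j} = ∩_{k ≠ j} I_k`. -/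
def Wj (j : Fin S.s) : Submodule K S.Gamma :=
  ⨅ (k : Fin S.s) (_ : k ≠ j),
    LinearMap.ker (LinearMap.proj k : S.Gamma →ₗ[K] (S.pt k).carrier)

/-- `(I_{𝕐_j/𝕏})_i` for the subscheme `𝕐_j` complementary to `p_j`. -/
def IW (j : Fin S.s) (i : ℕ) : Submodule K S.Gamma := S.V i ⊓ S.Wj j

/-- The Hilbert function of the subscheme `𝕐_j` complementary to `p_j`. -/
def HFW (j : Fin S.s) (i : ℕ) : ℕ := S.HF i - Module.finrank K (S.IW j i)

/-- `α_{𝕐_j/𝕏}` for the subscheme `𝕐_j` complementary to `p_j`. -/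
def alphaW (j : Fin S.s) : ℕ := sInf {i : ℕ | S.IW j i ≠ ⊥}

/-- The subspace `{x ∈ Γ | x_k = 0 for k ∉ {j₁, j₂}}` of `Γ`: the degreewise model for
the ideal in `R` of the subscheme of the reduced scheme `𝕏` complementary to `{p_{j₁}, p_{j₂}}`. -/
def Wpair (j1 j2 : Fin S.s) : Submodule K S.Gamma :=
  ⨅ (k : Fin S.s) (_ : k ≠ j1) (_ : k ≠ j2),
    LinearMap.ker (LinearMap.proj k : S.Gamma →ₗ[K] (S.pt k).carrier)

/-- The homogeneous vanishing ideal `I_𝕏 ⊆ P`. -/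
def IX : Ideal (MvPolynomial (Fin (n + 1)) K) :=
  Ideal.span {F | (∃ i : ℕ, F ∈ MvPolynomial.homogeneousSubmodule (Fin (n + 1)) K i) ∧
    S.germ F = 0}

/-- The `n×n`-minor (Jacobian determinant with respect to `X_1, …, X_n`) of an
`n`-tuple of polynomials. -/
def jacMinor (Fs : Fin n → MvPolynomial (Fin (n + 1)) K) : MvPolynomial (Fin (n + 1)) K :=
  Matrix.det (Matrix.of fun a b : Fin n => MvPolynomial.pderiv (Fin.succ b) (Fs a))

/-- The preimage in `P` of the Kähler different `ϑ_𝕏 ⊆ R`: the ideal generated by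
`I_𝕏` together with all `n×n` minors of the Jacobian matrix of elements of `I_𝕏`. -/
def KaehlerIdeal : Ideal (MvPolynomial (Fin (n + 1)) K) :=
  S.IX ⊔ Ideal.span {m | ∃ Fs : Fin n → MvPolynomial (Fin (n + 1)) K,
    (∀ a, Fs a ∈ S.IX) ∧ m = jacMinor Fs}

/-- The degree-`i` component of the Kähler different `ϑ_𝕏 ⊆ R`, viewed inside `Γ`. -/
def thetaPiece (i : ℕ) : Submodule K S.Gamma :=
  Submodule.map S.germ.toLinearMap
    (Submodule.restrictScalars K S.KaehlerIdeal ⊓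
      MvPolynomial.homogeneousSubmodule (Fin (n + 1)) K i)

end ZeroDimScheme

end

/-! Everything rests on two comparisons of the complementary module with `R̃`. In degrees `≥ 0`
the condition `σ(g · R) ⊆ K[x₀]` is void, so `R̃ ⊆ 𝔠`, and `δ · R̃ ⊆ δ · 𝔠 ⊆ R` gives `δ ⊆ 𝔉`.
Conversely `𝔉 · 𝔠 ⊆ R̃`: if `h ∈ 𝔉` and `g ∈ 𝔠` satisfy `deg h + deg g < 0`, then
`σ(h g · Γ) = σ(g · h Γ) = 0` because `h Γ ⊆ R`, and `h g = 0` by nondegeneracy of the trace.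
Hence `𝔉² · 𝔠 ⊆ 𝔉 · R̃ ⊆ R`. -/

theorem sum_comp_proj_comp_mulRight_injective {ι R : Type*} [Fintype ι] [CommSemiring R]
    {A : ι → Type*} [∀ j, NonUnitalNonAssocSemiring (A j)] [∀ j, Module R (A j)]
    [∀ j, IsScalarTower R (A j) (A j)] {τ : ∀ j, A j →ₗ[R] R}
    (hτ : ∀ j, Function.Injective fun a : A j => (τ j).comp (LinearMap.mulRight R a)) :
    Function.Injective fun a : ∀ j, A j =>
      (∑ j, (τ j).comp (LinearMap.proj j)).comp (LinearMap.mulRight R a) := by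
  classical
  have apply_single_mul (j : ι) (c : A j) (a : ∀ j, A j) :
      (∑ k, (τ k).comp (LinearMap.proj k)) (Pi.single j c * a) = τ j (c * a j) := by
    rw [LinearMap.sum_apply, Finset.sum_eq_single j]
    · simp
    · intro k _ hk
      simp [Pi.single_eq_of_ne hk]
    · simp
  intro a b hab
  funext j
  refine hτ j (LinearMap.ext fun c => ?_)
  simpa only [LinearMap.comp_apply, LinearMap.mulRight_apply, apply_single_mul] using
    LinearMap.congr_fun hab (Pi.single j c)

namespace ZeroDimScheme

variable {K : Type} [Field K] {n : ℕ} {S : ZeroDimScheme K n}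
  {τ : ∀ j, (S.pt j).carrier →ₗ[K] K}

theorem mem_cond {i : ℕ} {f : S.Gamma} : f ∈ S.cond i ↔ ∀ y, f * y ∈ S.V i := by
  simp [cond]

theorem mem_Cmod {k : ℤ} {g : S.Gamma} :
    g ∈ S.Cmod τ k ↔ ∀ i : ℕ, k + i < 0 → ∀ x ∈ S.V i, S.Ttot τ (g * x) = 0 := by
  simp [Cmod]

theorem mem_delta {i : ℤ} {f : S.Gamma} :
    f ∈ S.delta τ i ↔ ∀ k, ∀ g ∈ S.Cmod τ k, f * g ∈ S.Vz (i + k) := by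
  simp [delta]

theorem mem_Cmod_of_nonneg {k : ℤ} (hk : 0 ≤ k) (g : S.Gamma) : g ∈ S.Cmod τ k :=
  mem_Cmod.mpr fun i hi => by lia

theorem mem_condZ {i : ℤ} {f : S.Gamma} : f ∈ S.condZ i ↔ ∀ y, f * y ∈ S.Vz i := by
  by_cases hi : 0 ≤ i
  · simp [condZ, Vz, hi, mem_cond]
  · simp only [condZ, Vz, if_neg hi, Submodule.mem_bot]
    exact ⟨fun hf y => by rw [hf, zero_mul], fun hf => by simpa only [mul_one] using hf 1⟩

variable (S τ) in
theorem delta_le_condZ (i : ℤ) : S.delta τ i ≤ S.condZ i := fun f hf =>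
  mem_condZ.mpr fun y => by
    simpa only [add_zero] using mem_delta.mp hf 0 y (mem_Cmod_of_nonneg le_rfl y)

theorem V_mono : Monotone S.V := monotone_nat_of_le_succ fun i => by
  rintro _ ⟨F, hF, rfl⟩
  have hF_mul : (F * MvPolynomial.X 0).IsHomogeneous (i + 1) :=
    MvPolynomial.IsHomogeneous.mul hF (MvPolynomial.isHomogeneous_X K 0)
  exact ⟨F * MvPolynomial.X 0, hF_mul, by simp [S.germ_X0]⟩

theorem V_le_Vz {a : ℕ} {i : ℤ} (h : (a : ℤ) ≤ i) : S.V a ≤ S.Vz i := by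
  rw [Vz, if_pos (by lia)]
  exact V_mono (by lia)

theorem IsTraceFamily.eq_zero_of_forall_Ttot_mul_eq_zero (hτ : S.IsTraceFamily τ) {u : S.Gamma}
    (hu : ∀ y, S.Ttot τ (y * u) = 0) : u = 0 :=
  sum_comp_proj_comp_mulRight_injective (fun j => (hτ j).injective)
    (LinearMap.ext fun y => by simpa [Ttot] using hu y)

theorem IsTraceFamily.mul_eq_zero_of_mem_cond_of_mem_Cmod (hτ : S.IsTraceFamily τ) {b : ℕ} {k : ℤ}
    (hbk : b + k < 0) {h g : S.Gamma} (hh : h ∈ S.cond b) (hg : g ∈ S.Cmod τ k) : h * g = 0 :=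
  hτ.eq_zero_of_forall_Ttot_mul_eq_zero fun y => calc
    S.Ttot τ (y * (h * g)) = S.Ttot τ (g * (h * y)) := by ring_nf
    _ = 0 := mem_Cmod.mp hg b (by lia) _ (mem_cond.mp hh y)

theorem IsTraceFamily.cond_mul_cond_le_delta (hτ : S.IsTraceFamily τ) (a b : ℕ) :
    S.cond a * S.cond b ≤ S.delta τ (a + b : ℕ) := by
  refine Submodule.mul_le.mpr fun f hf h hh => mem_delta.mpr fun k g hg => ?_
  rw [mul_assoc]
  rcases lt_or_ge (b + k : ℤ) 0 with hbk | hbk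
  · rw [hτ.mul_eq_zero_of_mem_cond_of_mem_Cmod hbk hh hg, mul_zero]
    exact Submodule.zero_mem _
  · exact V_le_Vz (by lia) (mem_cond.mp hf (h * g))

end ZeroDimScheme

/-- Proposition 5.3 / `propSec4.3`.  Let `𝕏 ⊆ ℙⁿ_K` be a
0-dimensional locally Gorenstein scheme and `σ` a homogeneous trace map of degree
zero of `Q^h(R)/L₀`.  Then `𝔉_{R̃/R}² ⊆ δ^σ_𝕏 ⊆ 𝔉_{R̃/R}`, degreewise: every
degree-`i` component of `𝔉²` (i.e. `Σ_{a+b=i} 𝔉_a·𝔉_b`) is contained in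
`(δ^σ_𝕏)_i`, the different vanishes in negative degrees (where `𝔉 ⊆ R̃` vanishes),
and `(δ^σ_𝕏)_i ⊆ 𝔉_i` for all `i ≥ 0`. -/
theorem dedekind_CB_stmt9 (K : Type) [Field K] (n : ℕ) (S : ZeroDimScheme K n)
    (τ : ∀ j, (S.pt j).carrier →ₗ[K] K) (hτ : S.IsTraceFamily τ) :
    (∀ i : ℕ, (⨆ (a : ℕ) (b : ℕ) (_ : a + b = i), S.cond a * S.cond b) ≤
      S.delta τ (i : ℤ)) ∧
    (∀ i : ℤ, i < 0 → S.delta τ i = ⊥) ∧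
    (∀ i : ℕ, S.delta τ (i : ℤ) ≤ S.cond i) := by
  refine ⟨fun i => ?_, fun i hi => ?_, fun i => ?_⟩
  · refine iSup_le fun a => iSup_le fun b => iSup_le fun hab => ?_
    exact hab ▸ hτ.cond_mul_cond_le_delta a b
  · simpa [ZeroDimScheme.condZ, hi.not_ge] using S.delta_le_condZ τ i
  · simpa [ZeroDimScheme.condZ] using S.delta_le_condZ τ i
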